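/- For T = id = θ^i ⊗ e_i the conjugated structure B_id = (B, D_id, L, I_id) (with D_id = exp(𝔸_id) D exp(−𝔸_id) the BRST operator and I_id = exp(𝔸_id) I exp(−𝔸_id)) satisfies: its horizontal subalgebra is ker I_id = S g* ⊗ A; its basic subalgebra is (S g* ⊗ A)^G; on this basic subalgebra D_id coincides with the Cartan differential 𝖽 = 1 ⊗ d − Σ_k Ω^k ⊗ I_k; and consequently H^*_bas(B_id) ≅ CH^*_G(A). -/

import Mathlib

/-!
Common algebraic framework (following H. Cartan, and Guillemin–Sternberg):
*operations* of a Lie algebra on a ℤ-graded supercommutative algebra.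

For a **compact connected** Lie group `G`, a smooth `G`-action on a graded algebra is
determined infinitesimally, invariance under `G` coincides with infinitesimal invariance
(kernel of the Lie derivative), and `G`-equivariance of maps coincides with infinitesimal
equivariance.  Accordingly the smooth `G`-action is encoded by its infinitesimal Lie
derivative `L` below; topological (Fréchet) requirements, which play no role in the
statements, are omitted.
-/

open scoped TensorProduct

set_option synthInstance.maxHeartbeats 1000000
set_option maxHeartbeats 1600000

noncomputable section

/-- The sign `(-1)^n` for an integer `n`. -/
def sgn (n : ℤ) : ℤ := if Even n then 1 else -1

/-- An *operation* of a real Lie algebra `𝔤` on a `ℤ`-graded supercommutative real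
algebra `A`: a degree `+1` odd derivation `d` with `d² = 0`, an (infinitesimal) action
`L` of `𝔤` by even degree-`0` derivations commuting with `d`, and an equivariant
contraction `I` by odd degree-`(-1)` derivations satisfying anticommutation,
`[L_X, I_Y] = I_[X,Y]` and Cartan's formula `I_X d + d I_X = L_X`. -/
structure Operation (𝔤 : Type) [LieRing 𝔤] [LieAlgebra ℝ 𝔤]
    (A : Type) [Ring A] [Algebra ℝ A] : Type where
  grading : ℤ → Submodule ℝ A
  decomposition : DirectSum.Decomposition grading
  one_mem : (1 : A) ∈ grading 0
  mul_mem : ∀ {m n : ℤ} {a b : A}, a ∈ grading m → b ∈ grading n → a * b ∈ grading (m + n)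
  supercomm : ∀ {m n : ℤ} {a b : A}, a ∈ grading m → b ∈ grading n →
      a * b = sgn (m * n) • (b * a)
  d : Module.End ℝ A
  d_mem : ∀ {n : ℤ} {a : A}, a ∈ grading n → d a ∈ grading (n + 1)
  d_mul : ∀ {n : ℤ} {a : A}, a ∈ grading n → ∀ b : A,
      d (a * b) = d a * b + sgn n • (a * d b)
  d_sq : d ∘ₗ d = 0
  L : 𝔤 →ₗ[ℝ] Module.End ℝ A
  L_mem : ∀ (X : 𝔤) {n : ℤ} {a : A}, a ∈ grading n → L X a ∈ grading n
  L_mul : ∀ (X : 𝔤) (a b : A), L X (a * b) = L X a * b + a * L X b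
  L_bracket : ∀ X Y : 𝔤, L ⁅X, Y⁆ = L X ∘ₗ L Y - L Y ∘ₗ L X
  L_d : ∀ X : 𝔤, L X ∘ₗ d = d ∘ₗ L X
  I : 𝔤 →ₗ[ℝ] Module.End ℝ A
  I_mem : ∀ (X : 𝔤) {n : ℤ} {a : A}, a ∈ grading n → I X a ∈ grading (n - 1)
  I_mul : ∀ (X : 𝔤) {n : ℤ} {a : A}, a ∈ grading n → ∀ b : A,
      I X (a * b) = I X a * b + sgn n • (a * I X b)
  I_I : ∀ X Y : 𝔤, I X ∘ₗ I Y + I Y ∘ₗ I X = 0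
  L_I : ∀ X Y : 𝔤, L X ∘ₗ I Y - I Y ∘ₗ L X = I ⁅X, Y⁆
  cartan : ∀ X : 𝔤, I X ∘ₗ d + d ∘ₗ I X = L X

namespace Operation

variable {𝔤 : Type} [LieRing 𝔤] [LieAlgebra ℝ 𝔤] {A : Type} [Ring A] [Algebra ℝ A]

/-- Invariant elements (`= G`-invariant elements, for `G` compact connected). -/
def inv (op : Operation 𝔤 A) : Submodule ℝ A := ⨅ X : 𝔤, LinearMap.ker (op.L X)

/-- Horizontal elements. -/
def hor (op : Operation 𝔤 A) : Submodule ℝ A := ⨅ X : 𝔤, LinearMap.ker (op.I X)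

/-- Basic elements. -/
def bas (op : Operation 𝔤 A) : Submodule ℝ A := op.inv ⊓ op.hor

end Operation

/-- `n`-cocycles of the complex obtained by restricting `d` to the graded pieces `P n`. -/
def cocycles {A : Type} [AddCommGroup A] [Module ℝ A] (d : Module.End ℝ A)
    (P : ℤ → Submodule ℝ A) (n : ℤ) : Submodule ℝ A :=
  P n ⊓ LinearMap.ker d

/-- Degree-`n` cohomology of the subcomplex `P` (with differential `d`):
cocycles in `P n` modulo `d (P (n-1))`. -/
abbrev gradedCoh {A : Type} [AddCommGroup A] [Module ℝ A] (d : Module.End ℝ A)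
    (P : ℤ → Submodule ℝ A) (n : ℤ) :=
  ↥(cocycles d P n) ⧸
    Submodule.comap (cocycles d P n).subtype (Submodule.map d (P (n - 1)))

/-- Structure constants `C^i_{jk}` of `𝔤`: `⁅e_j, e_k⁆ = C^i_{jk} e_i`. -/
def structConst {ι 𝔤 : Type} [Fintype ι] [LieRing 𝔤] [LieAlgebra ℝ 𝔤]
    (b : Module.Basis ι ℝ 𝔤) (i j k : ι) : ℝ :=
  b.repr ⁅b j, b k⁆ i

/-- The Weil algebra `W_𝔤 = S𝔤* ⊗ Λ𝔤*` of `𝔤`, presented axiomatically: an operation `W`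
together with generators `θ^i` (degree 1) and `Ω^i` (degree 2) on which `d_W`, `L`, `I`
take the classical values, and such that the monomials `Ω^m · θ^S` form a basis
(this pins `W` down as `S𝔤* ⊗ Λ𝔤*`). -/
structure WeilData (ι : Type) [Fintype ι] [DecidableEq ι] [LinearOrder ι]
    {𝔤 : Type} [LieRing 𝔤] [LieAlgebra ℝ 𝔤] (b : Module.Basis ι ℝ 𝔤)
    (W : Type) [Ring W] [Algebra ℝ W] extends Operation 𝔤 W where
  θ : ι → W
  Ω : ι → W
  θ_mem : ∀ i, θ i ∈ grading 1
  Ω_mem : ∀ i, Ω i ∈ grading 2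
  d_θ : ∀ i, d (θ i) =
      (-(1/2 : ℝ)) • ∑ j, ∑ k, structConst b i j k • (θ j * θ k) + Ω i
  d_Ω : ∀ i, d (Ω i) = -∑ j, ∑ k, structConst b i j k • (θ j * Ω k)
  L_θ : ∀ i j, L (b i) (θ j) = -∑ k, structConst b j i k • θ k
  L_Ω : ∀ i j, L (b i) (Ω j) = -∑ k, structConst b j i k • Ω k
  I_θ : ∀ i j, I (b i) (θ j) = if i = j then 1 else 0
  I_Ω : ∀ i j, I (b i) (Ω j) = 0
  free : ∃ w : Module.Basis ((ι →₀ ℕ) × Finset ι) ℝ W, ∀ p : (ι →₀ ℕ) × Finset ι,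
      w p = ((Finset.univ.sort (· ≤ ·)).map fun i => Ω i ^ p.1 i).prod *
        ((p.2.sort (· ≤ ·)).map θ).prod

/-- An algebraic connection on an operation, in the coordinates given by the basis `b`:
elements `θ̃^i` of degree 1 with `I_j θ̃^k = δ^k_j` and `L_k θ̃^i = -C^i_{kj} θ̃^j`
(the latter is `G`-equivariance, infinitesimally). -/
structure Connection {ι : Type} [Fintype ι] [DecidableEq ι]
    {𝔤 : Type} [LieRing 𝔤] [LieAlgebra ℝ 𝔤] (b : Module.Basis ι ℝ 𝔤)
    {A : Type} [Ring A] [Algebra ℝ A] (op : Operation 𝔤 A) where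
  θ : ι → A
  θ_mem : ∀ i, θ i ∈ op.grading 1
  I_θ : ∀ i j, op.I (b i) (θ j) = if i = j then 1 else 0
  L_θ : ∀ i j, op.L (b i) (θ j) = -∑ k, structConst b j i k • θ k

/-- The curvature `ω̃^i = dθ̃^i - ½ C^i_{jk} θ̃^j θ̃^k` of a connection. -/
def Connection.curv {ι : Type} [Fintype ι] [DecidableEq ι]
    {𝔤 : Type} [LieRing 𝔤] [LieAlgebra ℝ 𝔤] {b : Module.Basis ι ℝ 𝔤}
    {A : Type} [Ring A] [Algebra ℝ A] {op : Operation 𝔤 A}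
    (c : Connection b op) (i : ι) : A :=
  op.d (c.θ i) - (1/2 : ℝ) • ∑ j, ∑ k, structConst b i j k • (c.θ j * c.θ k)

end

noncomputable section
open scoped TensorProduct

variable {ι : Type} [Fintype ι] [DecidableEq ι] [LinearOrder ι]
variable {𝔤 : Type} [LieRing 𝔤] [LieAlgebra ℝ 𝔤]
variable {A : Type} [Ring A] [Algebra ℝ A]
variable {W : Type} [Ring W] [Algebra ℝ W]

/-- Truncated exponential `exp(f) = Σ_{n<N} fⁿ/n!` of an endomorphism (all our
exponents are of nilpotent operators, so a suitable finite truncation is exact). -/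
def expEnd {M : Type} [AddCommGroup M] [Module ℝ M] (N : ℕ) (f : Module.End ℝ M) :
    Module.End ℝ M :=
  ∑ n ∈ Finset.range N, ((n.factorial : ℝ)⁻¹) • f ^ n

/-- The operator `𝔸^j_i = θ^j ⊗ I_i` on `B = W_𝔤 ⊗ A`: left multiplication by `θ^j`
composed with the contraction `I_i` of `A` (extended to the tensor product with the
usual Koszul sign operator `ε` of `W`). -/
def AOp (b : Module.Basis ι ℝ 𝔤) (wd : WeilData ι b W) (op : Operation 𝔤 A)
    (ε : Module.End ℝ W) (j i : ι) : Module.End ℝ (W ⊗[ℝ] A) :=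
  TensorProduct.map (LinearMap.mulLeft ℝ (wd.θ j) ∘ₗ ε) (op.I (b i))

/-- `𝔸_T = t^i_j 𝔸^j_i` for `T = t^i_j θ^j ⊗ e_i ∈ 𝔤* ⊗ 𝔤`. -/
def AOpT (b : Module.Basis ι ℝ 𝔤) (wd : WeilData ι b W) (op : Operation 𝔤 A)
    (ε : Module.End ℝ W) (T : ι → ι → ℝ) : Module.End ℝ (W ⊗[ℝ] A) :=
  ∑ i, ∑ j, T i j • AOp b wd op ε j i

/-- The operator `𝕃^j_i = θ^j ⊗ L_i - Ω^j ⊗ I_i` on `B = W_𝔤 ⊗ A`. -/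
def LOp (b : Module.Basis ι ℝ 𝔤) (wd : WeilData ι b W) (op : Operation 𝔤 A)
    (ε : Module.End ℝ W) (j i : ι) : Module.End ℝ (W ⊗[ℝ] A) :=
  TensorProduct.map (LinearMap.mulLeft ℝ (wd.θ j)) (op.L (b i)) -
    TensorProduct.map (LinearMap.mulLeft ℝ (wd.Ω j) ∘ₗ ε) (op.I (b i))

/-- `𝕃_T = t^i_j 𝕃^j_i` for `T = t^i_j θ^j ⊗ e_i ∈ 𝔤* ⊗ 𝔤`. -/
def LOpT (b : Module.Basis ι ℝ 𝔤) (wd : WeilData ι b W) (op : Operation 𝔤 A)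
    (ε : Module.End ℝ W) (T : ι → ι → ℝ) : Module.End ℝ (W ⊗[ℝ] A) :=
  ∑ i, ∑ j, T i j • LOp b wd op ε j i

/-- The differential `D = d_W ⊗ 1 + ε ⊗ d` of the tensor product operation
`B = W_𝔤 ⊗ A` (`ε` the grading/sign operator of `W`). -/
def DTot {b : Module.Basis ι ℝ 𝔤} (wd : WeilData ι b W) (op : Operation 𝔤 A)
    (ε : Module.End ℝ W) : Module.End ℝ (W ⊗[ℝ] A) :=
  LinearMap.rTensor A wd.d + TensorProduct.map ε op.d

/-- The total Lie derivative `L_X = L_X ⊗ 1 + 1 ⊗ L_X` of `B = W_𝔤 ⊗ A`. -/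
def LTot {b : Module.Basis ι ℝ 𝔤} (wd : WeilData ι b W) (op : Operation 𝔤 A)
    (X : 𝔤) : Module.End ℝ (W ⊗[ℝ] A) :=
  LinearMap.rTensor A (wd.L X) + LinearMap.lTensor W (op.L X)

/-- The total contraction `I_X = ι_X ⊗ 1 + ε ⊗ I_X` of `B = W_𝔤 ⊗ A`. -/
def ITot {b : Module.Basis ι ℝ 𝔤} (wd : WeilData ι b W) (op : Operation 𝔤 A)
    (ε : Module.End ℝ W) (X : 𝔤) : Module.End ℝ (W ⊗[ℝ] A) :=
  LinearMap.rTensor A (wd.I X) + TensorProduct.map ε (op.I X)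

/-! ### Statement 8 -/

/-- `𝔸_id = Σ_i 𝔸^i_i`, corresponding to `T = id = θ^i ⊗ e_i`. -/
def AId (b : Module.Basis ι ℝ 𝔤) (wd : WeilData ι b W) (op : Operation 𝔤 A)
    (ε : Module.End ℝ W) : Module.End ℝ (W ⊗[ℝ] A) :=
  ∑ i, AOp b wd op ε i i

/-- The BRST operator `D_id = exp(𝔸_id) D exp(-𝔸_id)`. -/
def DBRST (b : Module.Basis ι ℝ 𝔤) (wd : WeilData ι b W) (op : Operation 𝔤 A)
    (ε : Module.End ℝ W) : Module.End ℝ (W ⊗[ℝ] A) :=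
  expEnd (Fintype.card ι + 1) (AId b wd op ε) ∘ₗ DTot wd op ε ∘ₗ
    expEnd (Fintype.card ι + 1) (-AId b wd op ε)

/-- The conjugated contraction `I_id = exp(𝔸_id) I exp(-𝔸_id)`. -/
def IBRST (b : Module.Basis ι ℝ 𝔤) (wd : WeilData ι b W) (op : Operation 𝔤 A)
    (ε : Module.End ℝ W) (X : 𝔤) : Module.End ℝ (W ⊗[ℝ] A) :=
  expEnd (Fintype.card ι + 1) (AId b wd op ε) ∘ₗ ITot wd op ε X ∘ₗ
    expEnd (Fintype.card ι + 1) (-AId b wd op ε)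

/-- The copy of `S𝔤*` inside `W = S𝔤* ⊗ Λ𝔤*`: the span of the monomials in the `Ω^i`. -/
def symSub (b : Module.Basis ι ℝ 𝔤) (wd : WeilData ι b W) : Submodule ℝ W :=
  Submodule.span ℝ
    (Set.range fun m : ι → ℕ => ((Finset.univ.sort (· ≤ ·)).map fun i => wd.Ω i ^ m i).prod)

/-- The copy of `S𝔤* ⊗ A` inside `W ⊗ A`. -/
def symTensor (b : Module.Basis ι ℝ 𝔤) (wd : WeilData ι b W) (op : Operation 𝔤 A) :
    Submodule ℝ (W ⊗[ℝ] A) :=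
  LinearMap.range (TensorProduct.map (symSub b wd).subtype (LinearMap.id : A →ₗ[ℝ] A))

/-- The basic subalgebra of the conjugated structure `B_id`: joint kernel of the
conjugated contractions `I_id` and of the (unchanged, cf. Statement 7) total Lie
derivatives. -/
def basBRST (b : Module.Basis ι ℝ 𝔤) (wd : WeilData ι b W) (op : Operation 𝔤 A)
    (ε : Module.End ℝ W) : Submodule ℝ (W ⊗[ℝ] A) :=
  (⨅ X : 𝔤, LinearMap.ker (IBRST b wd op ε X)) ⊓
    (⨅ X : 𝔤, LinearMap.ker (LTot wd op X))

/-- The Cartan differential `𝖽 = 1 ⊗ d - Σ_k Ω^k ⊗ I_k`, as an operator on `W ⊗ A`. -/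
def cartanDW (b : Module.Basis ι ℝ 𝔤) (wd : WeilData ι b W) (op : Operation 𝔤 A) :
    Module.End ℝ (W ⊗[ℝ] A) :=
  LinearMap.lTensor W op.d -
    ∑ k, TensorProduct.map (LinearMap.mulLeft ℝ (wd.Ω k)) (op.I (b k))

/-- The degree-`n` part of `W ⊗ A`. -/
def grTensor (b : Module.Basis ι ℝ 𝔤) (wd : WeilData ι b W) (op : Operation 𝔤 A) (n : ℤ) :
    Submodule ℝ (W ⊗[ℝ] A) :=
  ⨆ p : ℤ, LinearMap.range
    (TensorProduct.map ((wd.grading p).subtype) ((op.grading (n - p)).subtype))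

/-- The coadjoint Lie derivative `𝐋ᵢ` on `S𝔤* = ℝ[Ω^j]`. -/
def coadL (b : Module.Basis ι ℝ 𝔤) (i : ι) : Module.End ℝ (MvPolynomial ι ℝ) :=
  (MvPolynomial.mkDerivation ℝ
    (fun j => -∑ k, structConst b j i k • (MvPolynomial.X k : MvPolynomial ι ℝ))).toLinearMap

/-- The Cartan differential on the Cartan model `S𝔤* ⊗ A`. -/
def cartanD (b : Module.Basis ι ℝ 𝔤) (op : Operation 𝔤 A) :
    Module.End ℝ (MvPolynomial ι ℝ ⊗[ℝ] A) :=
  LinearMap.lTensor (MvPolynomial ι ℝ) op.d -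
    ∑ k, TensorProduct.map (LinearMap.mulLeft ℝ (MvPolynomial.X k : MvPolynomial ι ℝ)) (op.I (b k))

/-- The total Lie derivative on the Cartan model `S𝔤* ⊗ A`. -/
def totL (b : Module.Basis ι ℝ 𝔤) (op : Operation 𝔤 A) (i : ι) :
    Module.End ℝ (MvPolynomial ι ℝ ⊗[ℝ] A) :=
  LinearMap.rTensor A (coadL b i) + LinearMap.lTensor (MvPolynomial ι ℝ) (op.L (b i))

/-- The degree-`n` part of the Cartan model `S𝔤* ⊗ A` (`S^p 𝔤*` has degree `2p`). -/
def grCartan (b : Module.Basis ι ℝ 𝔤) (op : Operation 𝔤 A) (n : ℤ) :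
    Submodule ℝ (MvPolynomial ι ℝ ⊗[ℝ] A) :=
  ⨆ p : ℕ, LinearMap.range
    (TensorProduct.map ((MvPolynomial.homogeneousSubmodule ι ℝ p).subtype)
      ((op.grading (n - 2 * p)).subtype))

/-- The invariant subalgebra `(S𝔤* ⊗ A)^G` of the Cartan model. -/
def invCartan (b : Module.Basis ι ℝ 𝔤) (op : Operation 𝔤 A) :
    Submodule ℝ (MvPolynomial ι ℝ ⊗[ℝ] A) :=
  ⨅ i : ι, LinearMap.ker (totL b op i)

/-! ### Helper lemmas: signs and homogeneous extension -/

theorem sgn_add' (m n : ℤ) : sgn (m + n) = sgn m * sgn n := by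
  unfold sgn
  by_cases hm : Even m <;> by_cases hn : Even n <;> simp [hm, hn, Int.even_add]

theorem sgn_even' {m : ℤ} (h : Even m) : sgn m = 1 := by simp [sgn, h]

theorem sgn_mul_self' (m : ℤ) : sgn m * sgn m = 1 := by
  unfold sgn; split_ifs <;> simp

theorem hom_ext' (op : Operation 𝔤 A) {M : Type} [AddCommGroup M] [Module ℝ M]
    {f g : A →ₗ[ℝ] M} (h : ∀ n : ℤ, ∀ a ∈ op.grading n, f a = g a) : f = g := by
  letI := op.decomposition
  ext a
  induction a using DirectSum.Decomposition.inductionOn op.grading with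
  | zero => simp
  | homogeneous m => exact h _ _ m.2
  | add m m' h1 h2 => rw [map_add, map_add, h1, h2]

section Weil
variable {b : Module.Basis ι ℝ 𝔤} (wd : WeilData ι b W)

theorem eps_mul' {ε : Module.End ℝ W} (hε : ∀ (n : ℤ), ∀ w ∈ wd.grading n, ε w = sgn n • w)
    {n : ℤ} {a : W} (ha : a ∈ wd.grading n) (w : W) : ε (a * w) = sgn n • (a * ε w) := by
  have : ε ∘ₗ LinearMap.mulLeft ℝ a = sgn n • (LinearMap.mulLeft ℝ a ∘ₗ ε) := by
    apply hom_ext' wd.toOperation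
    intro m w hw
    simp [hε _ _ hw, hε _ _ (wd.mul_mem ha hw), sgn_add', mul_smul, -zsmul_eq_mul]
  simpa using LinearMap.congr_fun this w

theorem eps_eps' {ε : Module.End ℝ W} (hε : ∀ (n : ℤ), ∀ w ∈ wd.grading n, ε w = sgn n • w) :
    ε * ε = 1 := by
  apply hom_ext' wd.toOperation
  intro m w hw
  simp [hε _ _ hw, smul_smul, sgn_mul_self', -zsmul_eq_mul]

theorem eps_θ' {ε : Module.End ℝ W} (hε : ∀ (n : ℤ), ∀ w ∈ wd.grading n, ε w = sgn n • w)
    (i : ι) : ε * LinearMap.mulLeft ℝ (wd.θ i) = -(LinearMap.mulLeft ℝ (wd.θ i) * ε) := by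
  ext w
  simp [eps_mul' wd hε (wd.θ_mem i), sgn]

theorem eps_even' {ε : Module.End ℝ W} (hε : ∀ (n : ℤ), ∀ w ∈ wd.grading n, ε w = sgn n • w)
    {u : W} (hu : u ∈ wd.grading 2) :
    ε * LinearMap.mulLeft ℝ u = LinearMap.mulLeft ℝ u * ε := by
  ext w
  simp [eps_mul' wd hε hu, sgn]

theorem even_comm' {u : W} (hu : u ∈ wd.grading 2) (a : W) : u * a = a * u := by
  have : LinearMap.mulLeft ℝ u = LinearMap.mulRight ℝ u := by
    apply hom_ext' wd.toOperation
    intro m w hw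
    simp [wd.supercomm hu hw, sgn]
  simpa using LinearMap.congr_fun this a

theorem θ_anti' (i j : ι) : wd.θ i * wd.θ j = -(wd.θ j * wd.θ i) := by
  rw [wd.supercomm (wd.θ_mem i) (wd.θ_mem j)]
  simp [sgn]

theorem θ_sq' (i : ι) : wd.θ i * wd.θ i = 0 := by
  have h := θ_anti' wd i i
  have h2 : (2 : ℝ) • (wd.θ i * wd.θ i) = 0 := by
    rw [two_smul]; nth_rewrite 1 [h]; simp
  simpa using h2

theorem I_eps' {ε : Module.End ℝ W} (hε : ∀ (n : ℤ), ∀ w ∈ wd.grading n, ε w = sgn n • w)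
    (X : 𝔤) : wd.I X * ε = -(ε * wd.I X) := by
  apply hom_ext' wd.toOperation
  intro m w hw
  have h : sgn (m - 1) = - sgn m := by rw [sub_eq_add_neg, sgn_add']; simp [sgn]
  simp [hε _ _ hw, hε _ _ (wd.I_mem X hw), h, -zsmul_eq_mul]

theorem d_eps' {ε : Module.End ℝ W} (hε : ∀ (n : ℤ), ∀ w ∈ wd.grading n, ε w = sgn n • w) :
    wd.d * ε = -(ε * wd.d) := by
  apply hom_ext' wd.toOperation
  intro m w hw
  have h : sgn (m + 1) = - sgn m := by rw [sgn_add']; simp [sgn]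
  simp [hε _ _ hw, hε _ _ (wd.d_mem hw), h, -zsmul_eq_mul]

theorem I_θ' (i j : ι) : wd.I (b i) * LinearMap.mulLeft ℝ (wd.θ j) =
    (if i = j then 1 else 0) - LinearMap.mulLeft ℝ (wd.θ j) * wd.I (b i) := by
  ext w
  simp only [Module.End.mul_apply, LinearMap.mulLeft_apply, wd.I_mul _ (wd.θ_mem j), wd.I_θ]
  by_cases h : i = j <;> simp [h, sgn, sub_eq_add_neg]

theorem d_θ' (j : ι) : wd.d * LinearMap.mulLeft ℝ (wd.θ j) =
    LinearMap.mulLeft ℝ (wd.d (wd.θ j)) - LinearMap.mulLeft ℝ (wd.θ j) * wd.d := by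
  ext w
  simp [wd.d_mul (wd.θ_mem j), sgn, sub_eq_add_neg]

end Weil

/-! ### The exponential -/

section Exp
variable {M : Type} [AddCommGroup M] [Module ℝ M]

theorem pow_conj' (a x c c2 : Module.End ℝ M) (hx : a * x = x * a + c) (hc : a * c = c * a + c2)
    (hc2 : a * c2 = c2 * a) (n : ℕ) :
    a ^ (n + 2) * x = x * a ^ (n + 2) + ((n : ℝ) + 2) • (c * a ^ (n + 1)) +
      (((n : ℝ) + 2) * (n + 1) / 2) • (c2 * a ^ n) := by
  induction n with
  | zero =>
    simp only [zero_add, pow_two, mul_assoc, hx, mul_add, pow_one, pow_zero, mul_one]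
    simp only [← mul_assoc, hx, hc]
    simp only [add_mul, mul_assoc]
    module
  | succ n ih =>
    have e : a ^ (n + 1 + 2) = a * a ^ (n + 2) := pow_succ' _ _
    rw [e, mul_assoc, ih]
    simp only [mul_add, mul_smul_comm]
    simp only [← mul_assoc, hx, hc, hc2]
    simp only [add_mul, mul_assoc, ← pow_succ', smul_add]
    rw [show n + 1 + 1 = n + 2 from rfl, show n + 2 + 1 = n + 3 from rfl]
    push_cast
    module

theorem expEnd_succ' (N : ℕ) (a : Module.End ℝ M) (h : a ^ N = 0) :
    expEnd (N + 1) a = expEnd N a := by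
  simp [expEnd, Finset.sum_range_succ, h]

theorem exp_conj' (a x c c2 : Module.End ℝ M) (hx : a * x = x * a + c) (hc : a * c = c * a + c2)
    (hc2 : a * c2 = c2 * a) (N : ℕ) (hN : a ^ N = 0) :
    expEnd N a * x = (x + c + (1 / 2 : ℝ) • c2) * expEnd N a := by
  have h1 := expEnd_succ' N a hN
  have h2 := expEnd_succ' (N + 1) a (by rw [pow_succ, hN, zero_mul])
  have key : expEnd (N + 2) a * x = x * expEnd (N + 2) a + c * expEnd (N + 1) a +
      (1 / 2 : ℝ) • (c2 * expEnd N a) := by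
    have hs : ∑ n ∈ Finset.range N, ((((n + 1 + 1).factorial : ℝ)⁻¹) • a ^ (n + 1 + 1)) * x =
        ∑ n ∈ Finset.range N, (x * ((((n + 1 + 1).factorial : ℝ)⁻¹) • a ^ (n + 1 + 1)) +
          c * ((((n + 1).factorial : ℝ)⁻¹) • a ^ (n + 1)) +
          (1 / 2 : ℝ) • (c2 * ((((n).factorial : ℝ)⁻¹) • a ^ n))) := by
      refine Finset.sum_congr rfl fun n _ => ?_
      rw [smul_mul_assoc, pow_conj' a x c c2 hx hc hc2]
      simp only [mul_smul_comm, smul_add, smul_smul, Nat.factorial_succ]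
      push_cast
      have hf : (n.factorial : ℝ) ≠ 0 := by positivity
      have hn1 : (n : ℝ) + 1 ≠ 0 := by positivity
      have hn2 : (n : ℝ) + 1 + 1 ≠ 0 := by positivity
      congr 1
      · congr 2
        field_simp
        ring
      · congr 1
        field_simp
        ring
    unfold expEnd
    rw [Finset.sum_range_succ' _ (N + 1), Finset.sum_range_succ' _ N,
      Finset.sum_range_succ' _ N]
    simp only [add_mul, Finset.sum_mul, hs]
    simp only [Finset.sum_add_distrib, mul_add, Finset.mul_sum, Finset.smul_sum]
    simp [hx]
    abel
  rw [h2, h1] at key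
  rw [key]
  simp [add_mul]

theorem expEnd_mul_neg' (a : Module.End ℝ M) (N : ℕ) (hN : a ^ N = 0) :
    expEnd N a * expEnd N (-a) = 1 := by
  have hn : IsNilpotent a := ⟨N, hN⟩
  have hN' : (-a) ^ N = 0 := by rw [neg_pow, hN, mul_zero]
  letI : Module ℚ (Module.End ℝ M) := Module.compHom _ (algebraMap ℚ ℝ)
  have e : ∀ f : Module.End ℝ M, f ^ N = 0 → expEnd N f = IsNilpotent.exp f := by
    intro f hf
    rw [IsNilpotent.exp_eq_sum hf]
    refine Finset.sum_congr rfl fun n _ => ?_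
    change _ = (algebraMap ℚ ℝ ((n.factorial : ℚ)⁻¹)) • f ^ n
    simp
  rw [e _ hN, e _ hN', IsNilpotent.exp_mul_exp_neg_self hn]

theorem sum_pow_zero' {κ : Type} (s : Finset κ) (f : κ → Module.End ℝ M)
    (hc : ∀ i j, Commute (f i) (f j)) (h2 : ∀ i, f i * f i = 0) :
    (∑ i ∈ s, f i) ^ (s.card + 1) = 0 := by
  classical
  induction s using Finset.induction_on with
  | empty => simp
  | insert i s hi ih =>
    rw [Finset.sum_insert hi, Finset.card_insert_of_notMem hi]
    refine Commute.add_pow_eq_zero_of_add_le_succ_of_pow_eq_zero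
      (m := 2) (n := s.card + 1) (Commute.sum_right _ _ _ fun j _ => hc i j) ?_ ih (by omega)
    rw [pow_two, h2]

end Exp

/-! ### The conjugated operators -/

section Conj
variable {b : Module.Basis ι ℝ 𝔤} (wd : WeilData ι b W) (op : Operation 𝔤 A)
  {ε : Module.End ℝ W}

theorem AOp_eq' (i j : ι) : AOp b wd op ε i j =
    TensorProduct.map (LinearMap.mulLeft ℝ (wd.θ i) * ε) (op.I (b j)) := rfl

theorem op_I_anti' (X Y : 𝔤) : op.I X * op.I Y = -(op.I Y * op.I X) :=
  eq_neg_of_add_eq_zero_left (op.I_I X Y)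

theorem eneg_mul' {M : Type} [AddCommGroup M] [Module ℝ M] (f g : Module.End ℝ M) :
    -f * g = -(f * g) := by ext; simp

theorem emul_neg' {M : Type} [AddCommGroup M] [Module ℝ M] (f g : Module.End ℝ M) :
    f * -g = -(f * g) := by ext; simp

theorem map_neg_left' (f : Module.End ℝ W) (g : Module.End ℝ A) :
    TensorProduct.map (-f) g = -TensorProduct.map f g := by
  apply TensorProduct.ext'; intro w a; simp [TensorProduct.neg_tmul]

theorem map_neg_right' (f : Module.End ℝ W) (g : Module.End ℝ A) :
    TensorProduct.map f (-g) = -TensorProduct.map f g := by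
  apply TensorProduct.ext'; intro w a; simp [TensorProduct.tmul_neg]

theorem map_sub_left' (f f' : Module.End ℝ W) (g : Module.End ℝ A) :
    TensorProduct.map (f - f') g = TensorProduct.map f g - TensorProduct.map f' g := by
  rw [sub_eq_add_neg, TensorProduct.map_add_left, map_neg_left', sub_eq_add_neg]

theorem map_sub_right' (f : Module.End ℝ W) (g g' : Module.End ℝ A) :
    TensorProduct.map f (g - g') = TensorProduct.map f g - TensorProduct.map f g' := by
  rw [sub_eq_add_neg, TensorProduct.map_add_right, map_neg_right', sub_eq_add_neg]

theorem θε_mul_θε'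
    (hε : ∀ (n : ℤ), ∀ w ∈ wd.grading n, ε w = sgn n • w) (i j : ι) : (LinearMap.mulLeft ℝ (wd.θ i) * ε) *
    (LinearMap.mulLeft ℝ (wd.θ j) * ε) = -LinearMap.mulLeft ℝ (wd.θ i * wd.θ j) := by
  rw [mul_assoc, ← mul_assoc ε, eps_θ' wd hε, eneg_mul', mul_assoc _ ε ε, eps_eps' wd hε, mul_one,
    emul_neg']
  ext w; simp [mul_assoc]

theorem AOp_commute'
    (hε : ∀ (n : ℤ), ∀ w ∈ wd.grading n, ε w = sgn n • w) (i j : ι) : Commute (AOp b wd op ε i i) (AOp b wd op ε j j) := by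
  simp only [Commute, SemiconjBy, AOp_eq', ← TensorProduct.map_mul, θε_mul_θε' wd hε]
  rw [op_I_anti' op (b i), θ_anti' wd i j, map_neg_right', ← map_neg_left']
  congr 1
  ext w; simp [mul_assoc]

theorem AOp_sq'
    (hε : ∀ (n : ℤ), ∀ w ∈ wd.grading n, ε w = sgn n • w) (i : ι) : AOp b wd op ε i i * AOp b wd op ε i i = 0 := by
  simp only [AOp_eq', ← TensorProduct.map_mul, θε_mul_θε' wd hε, θ_sq']
  simp

theorem AId_nil'
    (hε : ∀ (n : ℤ), ∀ w ∈ wd.grading n, ε w = sgn n • w) : AId b wd op ε ^ (Fintype.card ι + 1) = 0 :=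
  sum_pow_zero' Finset.univ _ (AOp_commute' wd op hε) (AOp_sq' wd op hε)

theorem A_rI'
    (hε : ∀ (n : ℤ), ∀ w ∈ wd.grading n, ε w = sgn n • w) (i k : ι) : AOp b wd op ε i i * TensorProduct.map (wd.I (b k)) 1 =
    TensorProduct.map (wd.I (b k)) 1 * AOp b wd op ε i i -
      if k = i then TensorProduct.map ε (op.I (b i)) else 0 := by
  simp only [AOp_eq', ← TensorProduct.map_mul, one_mul, mul_one]
  have h : LinearMap.mulLeft ℝ (wd.θ i) * ε * wd.I (b k) =
      wd.I (b k) * (LinearMap.mulLeft ℝ (wd.θ i) * ε) - (if k = i then ε else 0) := by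
    rw [← mul_assoc, I_θ', sub_mul, mul_assoc _ _ ε, I_eps' wd hε]
    split_ifs <;> simp [mul_assoc, emul_neg']
  rw [h, map_sub_left']
  split_ifs <;> simp

/-- Commutator with `u ε ⊗ I` for `u` of degree two. -/
theorem A_even'
    (hε : ∀ (n : ℤ), ∀ w ∈ wd.grading n, ε w = sgn n • w) (i : ι) (X : 𝔤) {u : W} (hu : u ∈ wd.grading 2) :
    AOp b wd op ε i i * TensorProduct.map (LinearMap.mulLeft ℝ u * ε) (op.I X) =
    TensorProduct.map (LinearMap.mulLeft ℝ u * ε) (op.I X) * AOp b wd op ε i i := by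
  simp only [AOp_eq', ← TensorProduct.map_mul]
  rw [op_I_anti' op (b i), map_neg_right', ← map_neg_left']
  congr 1
  rw [mul_assoc, mul_assoc, ← mul_assoc ε, ← mul_assoc ε, eps_even' wd hε hu, eps_θ' wd hε,
    eneg_mul', mul_assoc _ ε ε, mul_assoc _ ε ε, eps_eps' wd hε, mul_one, mul_one, emul_neg']
  congr 1
  ext w
  simp [← mul_assoc, even_comm' wd hu]

theorem A_εI'
    (hε : ∀ (n : ℤ), ∀ w ∈ wd.grading n, ε w = sgn n • w) (i k : ι) : AOp b wd op ε i i * TensorProduct.map ε (op.I (b k)) =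
    TensorProduct.map ε (op.I (b k)) * AOp b wd op ε i i := by
  simp only [AOp_eq', ← TensorProduct.map_mul]
  rw [op_I_anti' op (b i), map_neg_right', ← map_neg_left']
  congr 1
  rw [← mul_assoc ε, eps_θ' wd hε, eneg_mul', mul_assoc]

theorem IBRST_eq'
    (hε : ∀ (n : ℤ), ∀ w ∈ wd.grading n, ε w = sgn n • w) (X : 𝔤) : IBRST b wd op ε X = TensorProduct.map (wd.I X) 1 := by
  have hb : ∀ k, IBRST b wd op ε (b k) = TensorProduct.map (wd.I (b k)) 1 := by
    intro k
    have hx : AId b wd op ε * ITot wd op ε (b k) =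
        ITot wd op ε (b k) * AId b wd op ε + -TensorProduct.map ε (op.I (b k)) := by
      change _ * (TensorProduct.map (wd.I (b k)) 1 + _) =
        (TensorProduct.map (wd.I (b k)) 1 + _) * _ + _
      simp only [AId, mul_add, add_mul, Finset.sum_mul, Finset.mul_sum, A_rI' wd op hε,
        A_εI' wd op hε, Finset.sum_sub_distrib, Finset.sum_add_distrib, Finset.sum_ite_eq,
        Finset.mem_univ, if_true]
      abel
    have hc : AId b wd op ε * -TensorProduct.map ε (op.I (b k)) =
        -TensorProduct.map ε (op.I (b k)) * AId b wd op ε + 0 := by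
      simp only [AId, emul_neg', eneg_mul', Finset.sum_mul, Finset.mul_sum, A_εI' wd op hε, add_zero]
    have h := exp_conj' _ _ _ _ hx hc (by simp) _ (AId_nil' wd op hε)
    change expEnd _ _ * (ITot wd op ε (b k) * _) = _
    rw [← mul_assoc, h, mul_assoc, expEnd_mul_neg' _ _ (AId_nil' wd op hε)]
    change (TensorProduct.map (wd.I (b k)) 1 + _) + _ + _ = _
    simp
  obtain ⟨c, rfl⟩ : ∃ c : ι → ℝ, X = ∑ i, c i • b i := ⟨b.repr X, (b.sum_repr X).symm⟩
  have h1 : IBRST b wd op ε (∑ i, c i • b i) = ∑ i, c i • IBRST b wd op ε (b i) := by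
    have : ITot wd op ε (∑ i, c i • b i) = ∑ i, c i • ITot wd op ε (b i) := by
      apply TensorProduct.ext'
      intro w a
      simp [ITot, TensorProduct.sum_tmul, TensorProduct.tmul_sum, ← TensorProduct.smul_tmul',
        Finset.sum_add_distrib]
    unfold IBRST
    rw [this]
    ext x
    simp [LinearMap.sum_apply]
  rw [h1]
  apply TensorProduct.ext'
  intro w a
  simp [hb, TensorProduct.sum_tmul, ← TensorProduct.smul_tmul']

theorem A_d'
    (hε : ∀ (n : ℤ), ∀ w ∈ wd.grading n, ε w = sgn n • w) (i : ι) : AOp b wd op ε i i * TensorProduct.map wd.d 1 =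
    TensorProduct.map wd.d 1 * AOp b wd op ε i i -
      TensorProduct.map (LinearMap.mulLeft ℝ (wd.d (wd.θ i)) * ε) (op.I (b i)) := by
  simp only [AOp_eq', ← TensorProduct.map_mul, one_mul, mul_one]
  rw [← map_sub_left']
  congr 1
  rw [← mul_assoc, d_θ', sub_mul, mul_assoc _ wd.d ε, d_eps' wd hε]
  simp [mul_assoc, emul_neg']

theorem A_εd'
    (hε : ∀ (n : ℤ), ∀ w ∈ wd.grading n, ε w = sgn n • w) (i : ι) : AOp b wd op ε i i * TensorProduct.map ε op.d =
    TensorProduct.map ε op.d * AOp b wd op ε i i +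
      TensorProduct.map (LinearMap.mulLeft ℝ (wd.θ i)) (op.L (b i)) := by
  simp only [AOp_eq', ← TensorProduct.map_mul]
  have h : op.L (b i) = op.I (b i) * op.d + op.d * op.I (b i) := (op.cartan _).symm
  rw [h, TensorProduct.map_add_right, ← mul_assoc ε, eps_θ' wd hε, eneg_mul', mul_assoc,
    eps_eps' wd hε, mul_one, map_neg_left']
  abel

theorem A_θL'
    (hε : ∀ (n : ℤ), ∀ w ∈ wd.grading n, ε w = sgn n • w) (i j : ι) :
    AOp b wd op ε i i * TensorProduct.map (LinearMap.mulLeft ℝ (wd.θ j)) (op.L (b j)) =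
    TensorProduct.map (LinearMap.mulLeft ℝ (wd.θ j)) (op.L (b j)) * AOp b wd op ε i i +
      TensorProduct.map (LinearMap.mulLeft ℝ (wd.θ i * wd.θ j) * ε) (op.I ⁅b j, b i⁆) := by
  simp only [AOp_eq', ← TensorProduct.map_mul]
  have h : op.I ⁅b j, b i⁆ = op.L (b j) * op.I (b i) - op.I (b i) * op.L (b j) :=
    (op.L_I _ _).symm
  have h1 : LinearMap.mulLeft ℝ (wd.θ i) * ε * LinearMap.mulLeft ℝ (wd.θ j) =
      -(LinearMap.mulLeft ℝ (wd.θ i * wd.θ j) * ε) := by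
    rw [mul_assoc, eps_θ' wd hε]
    ext w; simp [mul_assoc]
  have h2 : LinearMap.mulLeft ℝ (wd.θ j) * (LinearMap.mulLeft ℝ (wd.θ i) * ε) =
      -(LinearMap.mulLeft ℝ (wd.θ i * wd.θ j) * ε) := by
    rw [θ_anti' wd i j]
    ext w; simp [mul_assoc]
  rw [h, h1, h2, map_sub_right', map_neg_left', map_neg_left']
  abel

theorem I_bracket' (i j : ι) : op.I ⁅b j, b i⁆ = -∑ k, structConst b k i j • op.I (b k) := by
  have h : ⁅b i, b j⁆ = ∑ k, structConst b k i j • b k := (b.sum_repr _).symm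
  rw [← lie_skew, h]
  simp

theorem C2_eq' : ∑ i, ∑ j, TensorProduct.map (LinearMap.mulLeft ℝ (wd.θ i * wd.θ j) * ε)
      (op.I ⁅b j, b i⁆) =
    (2 : ℝ) • ∑ k, TensorProduct.map (LinearMap.mulLeft ℝ (wd.d (wd.θ k) - wd.Ω k) * ε)
      (op.I (b k)) := by
  apply TensorProduct.ext'
  intro w a
  simp only [I_bracket', wd.d_θ, add_sub_cancel_right]
  simp only [LinearMap.sum_apply, TensorProduct.map_tmul, Module.End.mul_apply,
    LinearMap.mulLeft_apply, LinearMap.neg_apply, LinearMap.smul_apply, TensorProduct.tmul_neg,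
    TensorProduct.tmul_sum, TensorProduct.tmul_smul, smul_mul_assoc, Finset.sum_mul,
    Finset.smul_sum, TensorProduct.sum_tmul, ← TensorProduct.smul_tmul', smul_smul,
    Finset.sum_neg_distrib, ← Finset.sum_neg_distrib]
  rw [Finset.sum_comm' (t' := Finset.univ) (s' := fun _ => Finset.univ) (by simp)]
  rw [Finset.sum_comm]
  conv_rhs => rw [Finset.sum_comm]
  refine Finset.sum_congr rfl fun i _ => ?_
  conv_rhs => rw [Finset.sum_comm]
  refine Finset.sum_congr rfl fun j _ => Finset.sum_congr rfl fun k _ => ?_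
  rw [← neg_smul]
  congr 1
  ring

theorem DBRST_eq'
    (hε : ∀ (n : ℤ), ∀ w ∈ wd.grading n, ε w = sgn n • w) : DBRST b wd op ε = DTot wd op ε +
    ∑ i, TensorProduct.map (LinearMap.mulLeft ℝ (wd.θ i)) (op.L (b i)) -
    ∑ i, TensorProduct.map (LinearMap.mulLeft ℝ (wd.Ω i) * ε) (op.I (b i)) := by
  set T := ∑ i, TensorProduct.map (LinearMap.mulLeft ℝ (wd.θ i)) (op.L (b i)) with hT
  set U := ∑ i, TensorProduct.map (LinearMap.mulLeft ℝ (wd.d (wd.θ i)) * ε) (op.I (b i)) with hU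
  set V := ∑ k, TensorProduct.map (LinearMap.mulLeft ℝ (wd.d (wd.θ k) - wd.Ω k) * ε)
      (op.I (b k)) with hV
  have hdθ : ∀ i, wd.d (wd.θ i) ∈ wd.grading 2 := fun i => wd.d_mem (wd.θ_mem i)
  have hx : AId b wd op ε * DTot wd op ε = DTot wd op ε * AId b wd op ε + (T - U) := by
    change _ * (TensorProduct.map wd.d 1 + _) = (TensorProduct.map wd.d 1 + _) * _ + _
    simp only [AId, mul_add, add_mul, Finset.sum_mul, Finset.mul_sum, A_d' wd op hε,
      A_εd' wd op hε, Finset.sum_sub_distrib, Finset.sum_add_distrib, hT, hU]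
    abel
  have hAU : AId b wd op ε * U = U * AId b wd op ε := by
    simp only [AId, hU, Finset.sum_mul, Finset.mul_sum, A_even' wd op hε _ _ (hdθ _)]
    rw [Finset.sum_comm]
  have hAV : AId b wd op ε * V = V * AId b wd op ε := by
    simp only [AId, hV, Finset.sum_mul, Finset.mul_sum,
      A_even' wd op hε _ _ (Submodule.sub_mem _ (hdθ _) (wd.Ω_mem _))]
    rw [Finset.sum_comm]
  have hAT : AId b wd op ε * T = T * AId b wd op ε + (2 : ℝ) • V := by
    rw [hV, ← C2_eq']
    simp only [AId, hT, Finset.sum_mul, Finset.mul_sum, A_θL' wd op hε, Finset.sum_add_distrib]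
    congr 1 <;> exact Finset.sum_comm
  have h := exp_conj' _ _ _ ((2 : ℝ) • V) hx (by rw [mul_sub, sub_mul, hAU, hAT]; abel)
    (by rw [mul_smul_comm, hAV, smul_mul_assoc]) _ (AId_nil' wd op hε)
  change expEnd _ _ * (DTot wd op ε * _) = _
  rw [← mul_assoc, h, mul_assoc, expEnd_mul_neg' _ _ (AId_nil' wd op hε), mul_one]
  have hUV : V = U - ∑ i, TensorProduct.map (LinearMap.mulLeft ℝ (wd.Ω i) * ε) (op.I (b i)) := by
    rw [hU, hV, ← Finset.sum_sub_distrib]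
    refine Finset.sum_congr rfl fun i _ => ?_
    rw [← map_sub_left']
    congr 1
    ext w; simp [sub_mul]
  rw [smul_smul]
  norm_num
  rw [hUV]
  abel

end Conj

/-! ### The polynomial part of the Weil algebra -/

section Poly
variable {b : Module.Basis ι ℝ 𝔤} (wd : WeilData ι b W)

/-- The algebra map `S𝔤* → W`. -/
def phiW : MvPolynomial ι ℝ →ₐ[ℝ] W :=
  (Subalgebra.center ℝ W).val.comp
    (MvPolynomial.aeval fun i => (⟨wd.Ω i, Subalgebra.mem_center_iff.2 fun a =>
      (even_comm' wd (wd.Ω_mem i) a).symm⟩ : Subalgebra.center ℝ W))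

theorem phiW_X (i : ι) : phiW wd (MvPolynomial.X i) = wd.Ω i := by
  simp [phiW]

theorem phiW_comm (p : MvPolynomial ι ℝ) (a : W) : a * phiW wd p = phiW wd p * a :=
  Subalgebra.mem_center_iff.1 (MvPolynomial.aeval (fun i => (⟨wd.Ω i, Subalgebra.mem_center_iff.2
    fun a => (even_comm' wd (wd.Ω_mem i) a).symm⟩ : Subalgebra.center ℝ W)) p).2 a

theorem phiW_monomial (m : ι →₀ ℕ) : phiW wd (MvPolynomial.monomial m 1) =
    ((Finset.univ.sort (· ≤ ·)).map fun i => wd.Ω i ^ m i).prod := by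
  have h : (MvPolynomial.monomial m (1 : ℝ)) =
      ((Finset.univ.sort (· ≤ ·)).map fun i => (MvPolynomial.X i : MvPolynomial ι ℝ) ^ m i).prod := by
    rw [MvPolynomial.monomial_eq, Finsupp.prod_fintype _ _ (by simp)]
    rw [Finset.prod_eq_multiset_prod, ← Finset.sort_eq Finset.univ (· ≤ ·), Multiset.map_coe,
      Multiset.prod_coe]
    simp
  rw [h, map_list_prod, List.map_map]
  congr 2
  ext i
  simp [phiW_X]

/-- Induction by multiplication with variables from the left. -/
theorem poly_induct {P : MvPolynomial ι ℝ → Prop} (h1 : P 1)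
    (hs : ∀ (r : ℝ) p, P p → P (r • p)) (ha : ∀ p q, P p → P q → P (p + q))
    (hX : ∀ i p, P p → P (MvPolynomial.X i * p)) (p : MvPolynomial ι ℝ) : P p := by
  induction p using MvPolynomial.induction_on with
  | C r => simpa [MvPolynomial.smul_eq_C_mul] using hs r _ h1
  | add p q hp hq => exact ha _ _ hp hq
  | mul_X p i hp => rw [mul_comm]; exact hX _ _ hp

theorem op_L_one (op : Operation 𝔤 A) (X : 𝔤) : op.L X 1 = 0 := by
  simpa using op.L_mul X 1 1

theorem op_I_one (op : Operation 𝔤 A) (X : 𝔤) : op.I X 1 = 0 := by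
  simpa [sgn] using op.I_mul X op.one_mem 1

theorem op_d_one (op : Operation 𝔤 A) : op.d 1 = 0 := by
  simpa [sgn] using op.d_mul op.one_mem 1

theorem phiW_I (k : ι) (p : MvPolynomial ι ℝ) : wd.I (b k) (phiW wd p) = 0 := by
  induction p using poly_induct with
  | h1 => simp [op_I_one]
  | hs r p hp => simp [hp]
  | ha p q hp hq => simp [hp, hq]
  | hX i p hp => rw [map_mul, phiW_X, wd.I_mul _ (wd.Ω_mem i), wd.I_Ω, hp]; simp

theorem phiW_eps {ε : Module.End ℝ W} (hε : ∀ (n : ℤ), ∀ w ∈ wd.grading n, ε w = sgn n • w)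
    (p : MvPolynomial ι ℝ) : ε (phiW wd p) = phiW wd p := by
  induction p using poly_induct with
  | h1 => simp [hε _ _ wd.one_mem, sgn]
  | hs r p hp => simp [hp]
  | ha p q hp hq => simp [hp, hq]
  | hX i p hp => rw [map_mul, phiW_X, eps_mul' wd hε (wd.Ω_mem i), hp]; simp [sgn]

theorem phiW_L (k : ι) (p : MvPolynomial ι ℝ) :
    wd.L (b k) (phiW wd p) = phiW wd (coadL b k p) := by
  induction p using poly_induct with
  | h1 => simp [op_L_one, coadL]
  | hs r p hp => simp [hp]
  | ha p q hp hq => simp [hp, hq]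
  | hX i p hp =>
    have h : coadL b k (MvPolynomial.X i * p) = MvPolynomial.X i * coadL b k p +
        p * -∑ l, structConst b i k l • (MvPolynomial.X l : MvPolynomial ι ℝ) := by
      simp [coadL]
    rw [map_mul, phiW_X, wd.L_mul, wd.L_Ω, hp, h, map_add, map_mul, phiW_X, map_mul]
    rw [← phiW_comm wd p, map_neg, map_sum]
    simp only [map_smul, phiW_X]
    abel

theorem phiW_d (p : MvPolynomial ι ℝ) :
    wd.d (phiW wd p) = ∑ j, wd.θ j * wd.L (b j) (phiW wd p) := by
  induction p using poly_induct with
  | h1 => simp [op_L_one, op_d_one]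
  | hs r p hp => simp [hp, Finset.smul_sum]
  | ha p q hp hq => simp [hp, hq, mul_add, Finset.sum_add_distrib]
  | hX i p hp =>
    rw [map_mul, phiW_X, wd.d_mul (wd.Ω_mem i), hp, wd.d_Ω]
    simp only [wd.L_mul, wd.L_Ω, mul_add, Finset.sum_add_distrib]
    congr 1
    · simp only [Finset.sum_mul, Finset.mul_sum, neg_mul, mul_neg, Finset.sum_neg_distrib,
        mul_assoc, smul_mul_assoc, mul_smul_comm]
    · rw [Finset.mul_sum, sgn_even' (by decide), one_smul]
      refine Finset.sum_congr rfl fun j _ => ?_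
      rw [← mul_assoc, ← mul_assoc, even_comm' wd (wd.Ω_mem i)]

theorem phiW_monomial_mem (m : ι →₀ ℕ) :
    phiW wd (MvPolynomial.monomial m 1) ∈ wd.grading (2 * (m.degree : ℤ)) := by
  induction m using Finsupp.induction_linear with
  | zero => simpa using wd.one_mem
  | add f g hf hg =>
    have h : MvPolynomial.monomial (f + g) (1 : ℝ) =
      MvPolynomial.monomial f 1 * MvPolynomial.monomial g 1 := by simp [MvPolynomial.monomial_mul]
    rw [h, map_mul]
    have := wd.mul_mem hf hg
    simpa [mul_add] using this
  | single i n =>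
    rw [← MvPolynomial.X_pow_eq_monomial, map_pow, phiW_X]
    induction n with
    | zero => simpa using wd.one_mem
    | succ n ih =>
      rw [pow_succ]
      have := wd.mul_mem ih (wd.Ω_mem i)
      simpa [mul_add] using this

theorem phiW_mem {k : ℕ} {p : MvPolynomial ι ℝ}
    (hp : p ∈ MvPolynomial.homogeneousSubmodule ι ℝ k) : phiW wd p ∈ wd.grading (2 * (k : ℤ)) := by
  rw [MvPolynomial.mem_homogeneousSubmodule] at hp
  rw [p.as_sum, map_sum]
  refine Submodule.sum_mem _ fun m hm => ?_
  have h : MvPolynomial.monomial m (p.coeff m) = p.coeff m • MvPolynomial.monomial m (1 : ℝ) := by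
    simp [MvPolynomial.smul_monomial]
  have hd : m.degree = k := by
    have := hp (MvPolynomial.mem_support_iff.1 hm)
    rw [← this, Finsupp.degree_eq_weight_one]
    rfl
  rw [h, map_smul, ← hd]
  exact Submodule.smul_mem _ _ (phiW_monomial_mem wd m)

theorem thetaList_mem (l : List ι) : (l.map wd.θ).prod ∈ wd.grading (l.length : ℤ) := by
  induction l with
  | nil => simpa using wd.one_mem
  | cons i l ih =>
    have := wd.mul_mem (wd.θ_mem i) ih
    simpa [add_comm] using this

/-- The number operator counting the `θ`s. -/
def numW : Module.End ℝ W := ∑ k, LinearMap.mulLeft ℝ (wd.θ k) * wd.I (b k)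

theorem numW_θ (i : ι) (y : W) : numW wd (wd.θ i * y) = wd.θ i * y + wd.θ i * numW wd y := by
  have h : ∀ k, wd.θ k * wd.I (b k) (wd.θ i * y) =
      (if k = i then wd.θ k * y else 0) + wd.θ i * (wd.θ k * wd.I (b k) y) := by
    intro k
    rw [wd.I_mul _ (wd.θ_mem i), wd.I_θ, mul_add, ← mul_assoc (wd.θ i), θ_anti' wd i k]
    split_ifs <;> simp [sgn, mul_assoc]
  simp only [numW, LinearMap.sum_apply, Module.End.mul_apply, LinearMap.mulLeft_apply, h,
    Finset.sum_add_distrib, Finset.mul_sum]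
  simp

theorem numW_list (l : List ι) :
    numW wd (l.map wd.θ).prod = (l.length : ℝ) • (l.map wd.θ).prod := by
  induction l with
  | nil => simp [numW, LinearMap.sum_apply, op_I_one]
  | cons i l ih =>
    simp only [List.map_cons, List.prod_cons, numW_θ, ih, List.length_cons]
    push_cast
    rw [mul_smul_comm]
    module

theorem numW_phi_mul (p : MvPolynomial ι ℝ) (y : W) :
    numW wd (phiW wd p * y) = phiW wd p * numW wd y := by
  induction p using poly_induct with
  | h1 => simp
  | hs r p hp => simp [hp]
  | ha p q hp hq => simp [hp, hq, add_mul]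
  | hX i p hp =>
    have hΩ : ∀ z, numW wd (wd.Ω i * z) = wd.Ω i * numW wd z := by
      intro z
      simp only [numW, LinearMap.sum_apply, Module.End.mul_apply, LinearMap.mulLeft_apply,
        Finset.mul_sum, wd.I_mul _ (wd.Ω_mem i), wd.I_Ω]
      refine Finset.sum_congr rfl fun j _ => ?_
      rw [sgn_even' (by decide), one_smul, zero_mul, zero_add, ← mul_assoc, ← mul_assoc,
        even_comm' wd (wd.Ω_mem i)]
    rw [map_mul (phiW wd), phiW_X, mul_assoc, hΩ, hp, mul_assoc]

/-- The projection `W → S𝔤*` and its properties. -/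
theorem exists_rho : ∃ ρ : W →ₗ[ℝ] MvPolynomial ι ℝ, (∀ p, ρ (phiW wd p) = p) ∧
    (∃ K : Module.End ℝ W, ∀ w, K (numW wd w) = w - phiW wd (ρ w)) ∧
    (∀ (n : ℤ) (T : Submodule ℝ (MvPolynomial ι ℝ)),
      (∀ m : ι →₀ ℕ, 2 * (m.degree : ℤ) = n → MvPolynomial.monomial m 1 ∈ T) →
      ∀ w ∈ wd.grading n, ρ w ∈ T) := by
  obtain ⟨w, hw⟩ := wd.free
  have hw' : ∀ q, w q = phiW wd (MvPolynomial.monomial q.1 1) *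
      ((q.2.sort (· ≤ ·)).map wd.θ).prod := fun q => by rw [hw, phiW_monomial]
  have hN : ∀ q, numW wd (w q) = (q.2.card : ℝ) • w q := by
    intro q
    rw [hw', numW_phi_mul, numW_list, Finset.length_sort, mul_smul_comm]
  have hgr : ∀ q, w q ∈ wd.grading (2 * (q.1.degree : ℤ) + (q.2.card : ℤ)) := by
    intro q
    rw [hw']
    have := wd.mul_mem (phiW_monomial_mem wd q.1) (thetaList_mem wd (q.2.sort (· ≤ ·)))
    simpa using this
  let ρ : W →ₗ[ℝ] MvPolynomial ι ℝ :=
    w.constr ℝ fun q => if q.2.card = 0 then MvPolynomial.monomial q.1 1 else 0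
  have hρ : ∀ q, ρ (w q) = if q.2.card = 0 then MvPolynomial.monomial q.1 1 else 0 :=
    fun q => w.constr_basis ℝ _ q
  have hempty : ∀ m, phiW wd (MvPolynomial.monomial m 1) = w (m, ∅) := by
    intro m; rw [hw']; simp
  refine ⟨ρ, ?_, ?_, ?_⟩
  · intro p
    have : ρ ∘ₗ (phiW wd).toLinearMap = LinearMap.id := by
      apply MvPolynomial.linearMap_ext
      intro m
      ext
      simp [hempty, hρ]
    exact LinearMap.congr_fun this p
  · let K : Module.End ℝ W := w.constr ℝ fun q => ((q.2.card : ℝ)⁻¹) • w q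
    have hK : ∀ q, K (w q) = ((q.2.card : ℝ)⁻¹) • w q := fun q => w.constr_basis ℝ _ q
    refine ⟨K, fun x => ?_⟩
    have : K ∘ₗ numW wd = LinearMap.id - (phiW wd).toLinearMap ∘ₗ ρ := by
      apply w.ext
      intro q
      simp only [LinearMap.comp_apply, hN, map_smul, hK, LinearMap.sub_apply, LinearMap.id_apply,
        hρ, smul_smul]
      by_cases h : q.2.card = 0
      · have h' : q = (q.1, ∅) := Prod.ext rfl (Finset.card_eq_zero.1 h)
        have := hempty q.1
        rw [← h'] at this
        simp [h, this]
      · have : (q.2.card : ℝ) ≠ 0 := by exact_mod_cast h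
        simp [h, this]
    exact LinearMap.congr_fun this x
  · intro n T hT x hx
    let _ := wd.decomposition
    let f : W →ₗ[ℝ] W := (wd.grading n).subtype ∘ₗ
      DirectSum.component ℝ ℤ (fun i => wd.grading i) n ∘ₗ
        (DirectSum.decomposeLinearEquiv wd.grading).toLinearMap
    have hf : ∀ y, f y = (DirectSum.decompose wd.grading y n : W) := fun y => rfl
    have key : ∀ y, ρ (f y) ∈ T := by
      have : (⊤ : Submodule ℝ W) ≤ T.comap (ρ ∘ₗ f) := by
        rw [← w.span_eq, Submodule.span_le]
        rintro _ ⟨q, rfl⟩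
        change ρ (f (w q)) ∈ T
        by_cases hn : 2 * (q.1.degree : ℤ) + (q.2.card : ℤ) = n
        · rw [hf, DirectSum.decompose_of_mem_same _ (hn ▸ hgr q), hρ]
          split_ifs with hc
          · exact hT _ (by rw [← hn, hc]; simp)
          · exact T.zero_mem
        · rw [hf, DirectSum.decompose_of_mem_ne _ (hgr q) hn]
          simp
      exact fun y => this (Submodule.mem_top)
    have := key x
    rwa [hf, DirectSum.decompose_of_mem_same _ hx] at this

theorem range_map_le' {M N M' N' : Type} [AddCommGroup M] [Module ℝ M] [AddCommGroup N]
    [Module ℝ N] [AddCommGroup M'] [Module ℝ M'] [AddCommGroup N'] [Module ℝ N']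
    (f : M →ₗ[ℝ] M') (g : N →ₗ[ℝ] N') (P : Submodule ℝ (M' ⊗[ℝ] N'))
    (h : ∀ x y, f x ⊗ₜ[ℝ] g y ∈ P) : LinearMap.range (TensorProduct.map f g) ≤ P := by
  rintro _ ⟨x, rfl⟩
  induction x using TensorProduct.induction_on with
  | zero => simp
  | tmul x y => simpa using h x y
  | add x y hx hy => rw [map_add]; exact P.add_mem hx hy

/-- The map `S𝔤* ⊗ A → W ⊗ A`. -/
def PhiT (A : Type) [Ring A] [Algebra ℝ A] : MvPolynomial ι ℝ ⊗[ℝ] A →ₗ[ℝ] W ⊗[ℝ] A :=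
  TensorProduct.map (phiW wd).toLinearMap LinearMap.id

theorem PhiT_tmul (p : MvPolynomial ι ℝ) (a : A) : PhiT wd A (p ⊗ₜ a) = phiW wd p ⊗ₜ a := rfl

theorem phiW_mem_symSub (p : MvPolynomial ι ℝ) : phiW wd p ∈ symSub b wd := by
  rw [p.as_sum, map_sum]
  refine Submodule.sum_mem _ fun m hm => ?_
  have h : MvPolynomial.monomial m (p.coeff m) = p.coeff m • MvPolynomial.monomial m (1 : ℝ) := by
    simp [MvPolynomial.smul_monomial]
  rw [h, map_smul, phiW_monomial]
  exact Submodule.smul_mem _ _ (Submodule.subset_span ⟨m, rfl⟩)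

theorem symSub_le (w : W) (hw : w ∈ symSub b wd) : ∃ p, phiW wd p = w := by
  have : symSub b wd ≤ LinearMap.range (phiW wd).toLinearMap := by
    apply Submodule.span_le.2
    rintro _ ⟨m, rfl⟩
    refine ⟨MvPolynomial.monomial (Finsupp.equivFunOnFinite.symm m) 1, ?_⟩
    change phiW wd _ = _
    rw [phiW_monomial]
    rfl
  exact this hw

variable (op : Operation 𝔤 A)

theorem symTensor_eq : symTensor b wd op = LinearMap.range (PhiT wd A) := by
  apply le_antisymm
  · apply range_map_le'
    rintro ⟨w, hw⟩ a
    obtain ⟨p, rfl⟩ := symSub_le wd w hw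
    exact ⟨p ⊗ₜ a, rfl⟩
  · apply range_map_le'
    intro p a
    exact ⟨(⟨phiW wd p, phiW_mem_symSub wd p⟩ : symSub b wd) ⊗ₜ a, rfl⟩

theorem hor_eq : (⨅ X : 𝔤, LinearMap.ker (TensorProduct.map (wd.I X) (1 : Module.End ℝ A))) =
    symTensor b wd op := by
  obtain ⟨ρ, -, ⟨K, hK⟩, -⟩ := exists_rho wd
  rw [symTensor_eq]
  apply le_antisymm
  · intro x hx
    rw [Submodule.mem_iInf] at hx
    have h0 : TensorProduct.map (numW wd) (1 : Module.End ℝ A) x = 0 := by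
      have : TensorProduct.map (numW wd) (1 : Module.End ℝ A) =
          ∑ k, TensorProduct.map (LinearMap.mulLeft ℝ (wd.θ k)) 1 *
            TensorProduct.map (wd.I (b k)) (1 : Module.End ℝ A) := by
        apply TensorProduct.ext'
        intro w a
        simp [numW, LinearMap.sum_apply, TensorProduct.sum_tmul]
      rw [this, LinearMap.sum_apply]
      refine Finset.sum_eq_zero fun k _ => ?_
      rw [Module.End.mul_apply, LinearMap.mem_ker.1 (hx (b k)), map_zero]
    have h1 : TensorProduct.map K (1 : Module.End ℝ A) *
        TensorProduct.map (numW wd) (1 : Module.End ℝ A) =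
        LinearMap.id - PhiT wd A ∘ₗ TensorProduct.map ρ (1 : Module.End ℝ A) := by
      apply TensorProduct.ext'
      intro w a
      simp [hK, PhiT, TensorProduct.sub_tmul]
    have h2 := LinearMap.congr_fun h1 x
    rw [Module.End.mul_apply, h0, map_zero, LinearMap.sub_apply, eq_comm, sub_eq_zero] at h2
    exact ⟨_, h2.symm⟩
  · rw [le_iInf_iff]
    intro X
    apply range_map_le'
    intro p a
    obtain ⟨c, rfl⟩ : ∃ c : ι → ℝ, X = ∑ i, c i • b i := ⟨b.repr X, (b.sum_repr X).symm⟩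
    simp [phiW_I, LinearMap.sum_apply]

theorem PhiT_inj : Function.Injective (PhiT wd A) := by
  obtain ⟨ρ, h, -, -⟩ := exists_rho wd
  have h1 : TensorProduct.map ρ (1 : Module.End ℝ A) ∘ₗ PhiT wd A = LinearMap.id := by
    apply TensorProduct.ext'
    intro w a
    simp [PhiT, h]
  exact Function.LeftInverse.injective (g := TensorProduct.map ρ (1 : Module.End ℝ A))
    (fun x => LinearMap.congr_fun h1 x)

theorem PhiT_gr (n : ℤ) (x : MvPolynomial ι ℝ ⊗[ℝ] A) :
    PhiT wd A x ∈ grTensor b wd op n ↔ x ∈ grCartan b op n := by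
  obtain ⟨ρ, h, -, hρ⟩ := exists_rho wd
  have h1 : TensorProduct.map ρ (1 : Module.End ℝ A) ∘ₗ PhiT wd A = LinearMap.id := by
    apply TensorProduct.ext'
    intro w a
    simp [PhiT, h]
  constructor
  · intro hx
    have : grTensor b wd op n ≤ (grCartan b op n).comap
        (TensorProduct.map ρ (1 : Module.End ℝ A)) := by
      apply iSup_le
      intro p
      apply range_map_le'
      rintro ⟨w, hw⟩ ⟨a, ha⟩
      simp only [Submodule.subtype_apply, Submodule.mem_comap, TensorProduct.map_tmul,
        Module.End.one_apply]
      by_cases hp : ∃ k : ℕ, p = 2 * (k : ℤ)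
      · obtain ⟨k, rfl⟩ := hp
        have hm : ρ w ∈ MvPolynomial.homogeneousSubmodule ι ℝ k := by
          refine hρ _ _ (fun m hm => ?_) w hw
          rw [MvPolynomial.mem_homogeneousSubmodule]
          exact MvPolynomial.isHomogeneous_monomial _ (by omega)
        exact Submodule.mem_iSup_of_mem k ⟨(⟨ρ w, hm⟩ :
          MvPolynomial.homogeneousSubmodule ι ℝ k) ⊗ₜ (⟨a, ha⟩ : op.grading (n - 2 * k)), rfl⟩
      · have hm : ρ w ∈ (⊥ : Submodule ℝ (MvPolynomial ι ℝ)) :=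
          hρ _ _ (fun m hm => (hp ⟨_, hm.symm⟩).elim) w hw
        rw [(Submodule.mem_bot ℝ).1 hm, TensorProduct.zero_tmul]
        exact Submodule.zero_mem _
    have h2 := this hx
    rw [Submodule.mem_comap] at h2
    have h3 : TensorProduct.map ρ (1 : Module.End ℝ A) (PhiT wd A x) = x :=
      LinearMap.congr_fun h1 x
    rwa [h3] at h2
  · intro hx
    have : grCartan b op n ≤ (grTensor b wd op n).comap (PhiT wd A) := by
      apply iSup_le
      intro k
      apply range_map_le'
      rintro ⟨p, hp⟩ ⟨a, ha⟩
      rw [Submodule.mem_comap]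
      exact Submodule.mem_iSup_of_mem (2 * (k : ℤ)) ⟨(⟨phiW wd p, phiW_mem wd hp⟩ :
          wd.grading (2 * (k : ℤ))) ⊗ₜ (⟨a, ha⟩ : op.grading (n - 2 * k)), rfl⟩
    exact this hx

theorem PhiT_cartan (x : MvPolynomial ι ℝ ⊗[ℝ] A) :
    cartanDW b wd op (PhiT wd A x) = PhiT wd A (cartanD b op x) := by
  have : cartanDW b wd op ∘ₗ PhiT wd A = PhiT wd A ∘ₗ cartanD b op := by
    apply TensorProduct.ext'
    intro p a
    simp [cartanDW, cartanD, PhiT, LinearMap.sum_apply, phiW_X]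
  exact LinearMap.congr_fun this x

theorem PhiT_L (i : ι) (x : MvPolynomial ι ℝ ⊗[ℝ] A) :
    LTot wd op (b i) (PhiT wd A x) = PhiT wd A (totL b op i x) := by
  have : LTot wd op (b i) ∘ₗ PhiT wd A = PhiT wd A ∘ₗ totL b op i := by
    apply TensorProduct.ext'
    intro p a
    simp [LTot, totL, PhiT, phiW_L]
  exact LinearMap.congr_fun this x

theorem LTot_ker : (⨅ X : 𝔤, LinearMap.ker (LTot wd op X)) =
    ⨅ i, LinearMap.ker (LTot wd op (b i)) := by
  apply le_antisymm
  · exact le_iInf fun i => iInf_le _ _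
  · rw [le_iInf_iff]
    intro X x hx
    rw [Submodule.mem_iInf] at hx
    obtain ⟨c, rfl⟩ : ∃ c : ι → ℝ, X = ∑ i, c i • b i := ⟨b.repr X, (b.sum_repr X).symm⟩
    have h : LTot wd op (∑ i, c i • b i) = ∑ i, c i • LTot wd op (b i) := by
      apply TensorProduct.ext'
      intro w a
      simp [LTot, TensorProduct.sum_tmul, TensorProduct.tmul_sum, ← TensorProduct.smul_tmul',
        Finset.sum_add_distrib, LinearMap.sum_apply]
    rw [LinearMap.mem_ker, h, LinearMap.sum_apply]
    exact Finset.sum_eq_zero fun i _ => by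
      rw [LinearMap.smul_apply, LinearMap.mem_ker.1 (hx i), smul_zero]

theorem PhiT_inv (x : MvPolynomial ι ℝ ⊗[ℝ] A) :
    PhiT wd A x ∈ (⨅ X : 𝔤, LinearMap.ker (LTot wd op X)) ↔ x ∈ invCartan b op := by
  rw [LTot_ker, invCartan, Submodule.mem_iInf, Submodule.mem_iInf]
  refine forall_congr' fun i => ?_
  rw [LinearMap.mem_ker, LinearMap.mem_ker, PhiT_L, map_eq_zero_iff _ (PhiT_inj wd)]

theorem DBRST_PhiT {ε : Module.End ℝ W}
    (hε : ∀ (n : ℤ), ∀ w ∈ wd.grading n, ε w = sgn n • w) (x : MvPolynomial ι ℝ ⊗[ℝ] A) :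
    DBRST b wd op ε (PhiT wd A x) = cartanDW b wd op (PhiT wd A x) +
      ∑ i, TensorProduct.map (LinearMap.mulLeft ℝ (wd.θ i)) 1 (LTot wd op (b i) (PhiT wd A x)) := by
  have : DBRST b wd op ε ∘ₗ PhiT wd A = (cartanDW b wd op + ∑ i, TensorProduct.map
      (LinearMap.mulLeft ℝ (wd.θ i)) 1 ∘ₗ LTot wd op (b i)) ∘ₗ PhiT wd A := by
    apply TensorProduct.ext'
    intro p a
    rw [DBRST_eq' wd op hε]
    simp only [DTot, LTot, cartanDW, LinearMap.comp_apply, PhiT_tmul, LinearMap.add_apply,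
      LinearMap.sub_apply, LinearMap.sum_apply, LinearMap.rTensor_tmul, LinearMap.lTensor_tmul,
      TensorProduct.map_tmul, Module.End.mul_apply, phiW_eps wd hε, map_add,
      LinearMap.mulLeft_apply, Module.End.one_apply, phiW_d, TensorProduct.sum_tmul,
      Finset.sum_add_distrib]
    abel
  have h := LinearMap.congr_fun this x
  simpa [LinearMap.sum_apply] using h

end Poly

/-- Cohomology comparison along an injective map identifying two subcomplexes. -/
theorem coh_equiv {M N : Type} [AddCommGroup M] [Module ℝ M] [AddCommGroup N] [Module ℝ N]
    (f : M →ₗ[ℝ] N) (hf : Function.Injective f) (dM : Module.End ℝ M) (dN : Module.End ℝ N)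
    (P : ℤ → Submodule ℝ M) (Q : ℤ → Submodule ℝ N) (hPQ : ∀ n, (P n).map f = Q n)
    (hd : ∀ n, ∀ x ∈ P n, dN (f x) = f (dM x)) (n : ℤ) :
    Nonempty (gradedCoh dN Q n ≃ₗ[ℝ] gradedCoh dM P n) := by
  have hc : (cocycles dM P n).map f = cocycles dN Q n := by
    ext y
    constructor
    · rintro ⟨x, ⟨hx1, hx2⟩, rfl⟩
      refine ⟨hPQ n ▸ Submodule.mem_map_of_mem hx1, ?_⟩
      change dN (f x) = 0
      rw [hd n x hx1, LinearMap.mem_ker.1 hx2, map_zero]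
    · rintro ⟨hy1, hy2⟩
      rw [SetLike.mem_coe, ← hPQ n] at hy1
      obtain ⟨x, hx, rfl⟩ := hy1
      refine ⟨x, ⟨hx, ?_⟩, rfl⟩
      change dM x = 0
      apply hf
      rw [← hd n x hx, map_zero]
      exact hy2
  let e : cocycles dM P n ≃ₗ[ℝ] cocycles dN Q n :=
    (Submodule.equivMapOfInjective f hf _).trans (LinearEquiv.ofEq _ _ hc)
  have he : ∀ x, (e x : N) = f x := fun x => rfl
  refine ⟨(Submodule.Quotient.equiv _ _ e ?_).symm⟩
  ext y
  obtain ⟨x, rfl⟩ := e.surjective y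
  have h1 : e x ∈ Submodule.map (e : cocycles dM P n →ₗ[ℝ] cocycles dN Q n)
      (Submodule.comap (cocycles dM P n).subtype (Submodule.map dM (P (n - 1)))) ↔
      (x : M) ∈ Submodule.map dM (P (n - 1)) := by
    constructor
    · rintro ⟨z, hz, hze⟩
      obtain rfl : z = x := e.injective hze
      exact hz
    · intro h
      exact ⟨x, h, rfl⟩
  refine h1.trans ?_
  change _ ↔ (e x : N) ∈ Submodule.map dN (Q (n - 1))
  rw [he]
  constructor
  · rintro ⟨z, hz, hzx⟩
    exact ⟨f z, hPQ (n - 1) ▸ Submodule.mem_map_of_mem hz, by rw [hd _ z hz, hzx]⟩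
  · rintro ⟨z, hz, hzx⟩
    rw [SetLike.mem_coe, ← hPQ] at hz
    obtain ⟨u, hu, rfl⟩ := hz
    rw [hd _ u hu] at hzx
    exact ⟨u, hu, hf hzx⟩

/-- For `T = id`, the conjugated structure
`B_id = (B, D_id, L, I_id)` satisfies: its horizontal subalgebra `ker I_id` is
`S𝔤* ⊗ A`; its basic subalgebra is `(S𝔤* ⊗ A)^G`; on the basic subalgebra the BRST
operator `D_id` coincides with the Cartan differential `𝖽 = 1 ⊗ d - Σ_k Ω^k ⊗ I_k`;
and consequently `H^*_bas(B_id) ≅ CH^*_G(A)`. -/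
theorem brst_basic_subcomplex_is_cartan_model
    (b : Module.Basis ι ℝ 𝔤) (wd : WeilData ι b W) (op : Operation 𝔤 A)
    (ε : Module.End ℝ W) (hε : ∀ (n : ℤ), ∀ w ∈ wd.grading n, ε w = sgn n • w) :
    (⨅ X : 𝔤, LinearMap.ker (IBRST b wd op ε X)) = symTensor b wd op ∧
    basBRST b wd op ε =
      symTensor b wd op ⊓ (⨅ X : 𝔤, LinearMap.ker (LTot wd op X)) ∧
    (∀ x ∈ basBRST b wd op ε, DBRST b wd op ε x = cartanDW b wd op x) ∧
    (∀ n : ℤ, Nonempty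
      ((gradedCoh (DBRST b wd op ε) (fun m => basBRST b wd op ε ⊓ grTensor b wd op m) n)
        ≃ₗ[ℝ]
       (gradedCoh (cartanD b op) (fun m => invCartan b op ⊓ grCartan b op m) n))) := by
  have hhor : (⨅ X : 𝔤, LinearMap.ker (IBRST b wd op ε X)) = symTensor b wd op := by
    simp only [IBRST_eq' wd op hε]
    exact hor_eq wd op
  have hbas : basBRST b wd op ε =
      symTensor b wd op ⊓ (⨅ X : 𝔤, LinearMap.ker (LTot wd op X)) := by
    rw [basBRST, hhor]
  have hD : ∀ x ∈ basBRST b wd op ε, DBRST b wd op ε x = cartanDW b wd op x := by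
    intro x hx
    rw [hbas, symTensor_eq] at hx
    obtain ⟨⟨y, rfl⟩, hL⟩ := hx
    rw [DBRST_PhiT wd op hε, Finset.sum_eq_zero, add_zero]
    intro i _
    rw [LinearMap.mem_ker.1 ((Submodule.mem_iInf _).1 hL (b i)), map_zero]
  have hmem : ∀ x, PhiT wd A x ∈ basBRST b wd op ε ↔ x ∈ invCartan b op := by
    intro x
    rw [hbas, symTensor_eq, Submodule.mem_inf, PhiT_inv]
    exact ⟨fun h => h.2, fun h => ⟨⟨x, rfl⟩, h⟩⟩
  refine ⟨hhor, hbas, hD, fun n => ?_⟩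
  refine coh_equiv (PhiT wd A) (PhiT_inj wd) _ _ _ _ ?_ ?_ n
  · intro m
    ext y
    constructor
    · rintro ⟨x, ⟨hx1, hx2⟩, rfl⟩
      exact ⟨(hmem x).2 hx1, (PhiT_gr wd op m x).2 hx2⟩
    · rintro ⟨hy1, hy2⟩
      have hy3 := hy1
      rw [SetLike.mem_coe, hbas, symTensor_eq] at hy3
      obtain ⟨⟨x, rfl⟩, -⟩ := hy3
      exact ⟨x, ⟨(hmem x).1 hy1, (PhiT_gr wd op m x).1 hy2⟩, rfl⟩
  · intro m x hx
    rw [hD _ ((hmem x).2 hx.1), PhiT_cartan]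

end
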